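/- Let m ≤ n be positive integers and let L ⊆ M(m,n) be a complex linear subspace of dimension n−m+1 such that every nonzero matrix in L has rank m. Then for every matrix A ∈ M(m,n), the set {l ∈ L : rank(A + l) < m} is finite and nonempty. -/

import Mathlib

open MvPolynomial in
/-- A bounded algebraic subset of affine space is finite. -/
theorem aux_bounded_finite (k : ℕ) (I : Ideal (MvPolynomial (Fin k) ℂ))
    (hb : Bornology.IsBounded (zeroLocus ℂ I)) : (zeroLocus ℂ I).Finite := by
  by_cases hI : I = ⊤
  · subst hI
    rw [zeroLocus_top]; exact Set.finite_empty
  have : Nontrivial (MvPolynomial (Fin k) ℂ ⧸ I) := Ideal.Quotient.nontrivial_iff.mpr hI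
  obtain ⟨d, g, hinj, hfin⟩ := exists_finite_inj_algHom_of_fg ℂ (MvPolynomial (Fin k) ℂ ⧸ I)
  rcases Nat.eq_zero_or_pos d with hd | hd
  · subst hd
    have hC : Module.Finite ℂ (MvPolynomial (Fin k) ℂ ⧸ I) := by
      have h1 : (g.comp (Algebra.ofId ℂ (MvPolynomial (Fin 0) ℂ))).Finite := by
        apply AlgHom.Finite.comp hfin
        apply AlgHom.Finite.of_surjective
        exact MvPolynomial.C_surjective (Fin 0)
      have h2 : (g.comp (Algebra.ofId ℂ (MvPolynomial (Fin 0) ℂ))) = Algebra.ofId ℂ _ :=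
        Subsingleton.elim _ _
      rw [h2] at h1
      exact RingHom.finite_algebraMap.mp h1
    have hF : Finite ((MvPolynomial (Fin k) ℂ ⧸ I) →ₐ[ℂ] ℂ) := inferInstance
    let F : zeroLocus ℂ I → ((MvPolynomial (Fin k) ℂ ⧸ I) →ₐ[ℂ] ℂ) := fun z =>
      Ideal.Quotient.liftₐ I (aeval z.1) (fun p hp => z.2 p hp)
    have hFi : Function.Injective F := by
      intro z w h
      ext i
      have := congrArg (fun f => f (Ideal.Quotient.mk I (X i))) h
      simpa [F] using this
    exact Finite.of_injective F hFi
  · exfalso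
    obtain ⟨q, hq⟩ := Ideal.Quotient.mk_surjective (g (X ⟨0, hd⟩))
    have hcont : Continuous (fun z : Fin k → ℂ => eval z q) := MvPolynomial.continuous_eval q
    obtain ⟨K, hK⟩ := hb.isCompact_closure.exists_bound_of_continuousOn hcont.continuousOn
    let a : ℂ := ((|K| + 1 : ℝ) : ℂ)
    let P : Ideal (MvPolynomial (Fin d) ℂ) := vanishingIdeal ℂ {fun _ => a}
    have hP : P.IsMaximal := isMaximal_iff_eq_vanishingIdeal_singleton.mpr ⟨_, rfl⟩
    let := g.toRingHom.toAlgebra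
    have : Algebra.IsIntegral (MvPolynomial (Fin d) ℂ) (MvPolynomial (Fin k) ℂ ⧸ I) :=
      ⟨RingHom.Finite.to_isIntegral hfin⟩
    obtain ⟨M, hM, hMP⟩ := Ideal.exists_ideal_over_maximal_of_isIntegral
      (S := MvPolynomial (Fin k) ℂ ⧸ I) P (by
        intro x hx
        have : g x = 0 := hx
        have : x = 0 := hinj (by simpa using this)
        subst this; exact zero_mem _)
    have hM' : (M.comap (Ideal.Quotient.mk I)).IsMaximal :=
      Ideal.comap_isMaximal_of_surjective _ Ideal.Quotient.mk_surjective
    obtain ⟨z, hz⟩ := isMaximal_iff_eq_vanishingIdeal_singleton.mp hM'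
    have hzI : z ∈ zeroLocus ℂ I := by
      intro p hp
      have : p ∈ M.comap (Ideal.Quotient.mk I) := by
        rw [Ideal.mem_comap, Ideal.Quotient.eq_zero_iff_mem.mpr hp]; exact zero_mem _
      rw [hz] at this
      exact (mem_vanishingIdeal_singleton_iff _ _).mp this
    have hqz : q - C a ∈ M.comap (Ideal.Quotient.mk I) := by
      rw [Ideal.mem_comap, map_sub, hq]
      have h1 : (X ⟨0, hd⟩ - C a : MvPolynomial (Fin d) ℂ) ∈ P := by
        rw [mem_vanishingIdeal_singleton_iff]; simp
      rw [← hMP, Ideal.mem_comap] at h1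
      have h2 : g (X ⟨0, hd⟩ - C a) ∈ M := h1
      rw [map_sub] at h2
      have h3 : g (C a) = Ideal.Quotient.mk I (C a) := g.commutes a
      rwa [h3] at h2
    rw [hz, mem_vanishingIdeal_singleton_iff] at hqz
    have h4 : eval z q = a := by
      have : aeval z q - a = 0 := by simpa using hqz
      rw [← coe_aeval_eq_eval]; exact sub_eq_zero.mp this
    have h5 := hK z (subset_closure hzI)
    rw [h4] at h5
    have h6 : ‖a‖ = |K| + 1 := by
      simp only [a, Complex.norm_real, Real.norm_eq_abs]
      exact abs_of_nonneg (by positivity)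
    rw [h6] at h5
    linarith [le_abs_self K]

namespace HopfAux
open MvPolynomial

/-- index of variables -/
def idx (r s : ℕ) : Fin (r+1) ⊕ Fin (s+1) → ℕ
  | .inl a => if a.1 < r then a.1 else r + s
  | .inr b => r + b.1

/-- kill variables of small index -/
noncomputable def psi (r s N : ℕ) :
    MvPolynomial (Fin (r+1) ⊕ Fin (s+1)) ℂ →ₐ[ℂ] MvPolynomial (Fin (r+1) ⊕ Fin (s+1)) ℂ :=
  aeval (fun v => if idx r s v < N then 0 else X v)

/-- the Segre map -/
noncomputable def phi (r s : ℕ) :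
    MvPolynomial (Fin (r+1) × Fin (s+1)) ℂ →ₐ[ℂ] MvPolynomial (Fin (r+1) ⊕ Fin (s+1)) ℂ :=
  aeval (fun v => X (.inl v.1) * X (.inr v.2))

noncomputable abbrev Seg (r s : ℕ) := (phi r s).range

noncomputable def P (r s N : ℕ) : Ideal (Seg r s) :=
  RingHom.ker ((psi r s N).comp (Seg r s).val)

instance (r s N : ℕ) : (P r s N).IsPrime := by
  unfold P; exact RingHom.ker_isPrime _

lemma coe_rr (r s : ℕ) (q : MvPolynomial (Fin (r+1) × Fin (s+1)) ℂ) :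
    ((phi r s).rangeRestrict q : MvPolynomial (Fin (r+1) ⊕ Fin (s+1)) ℂ) = phi r s q := rfl

lemma val_rr (r s : ℕ) (a : Fin (r+1)) (b : Fin (s+1)) :
    (Seg r s).val ((phi r s).rangeRestrict (X (a, b))) = X (.inl a) * X (.inr b) := by
  change phi r s (X (a, b)) = _
  simp only [phi, aeval_X]

lemma psi_succ (r s N : ℕ) : psi r s (N+1) = (psi r s (N+1)).comp (psi r s N) := by
  apply MvPolynomial.algHom_ext
  intro v
  simp only [psi, AlgHom.comp_apply, aeval_X]
  by_cases h : idx r s v < N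
  · simp [h, Nat.lt_succ_of_lt h]
  · simp [h]

lemma P_lt (r s N : ℕ) (hN : N ≤ r + s) : P r s N < P r s (N+1) := by
  refine lt_of_le_of_ne ?_ ?_
  · intro y hy
    simp only [P, RingHom.mem_ker, AlgHom.comp_apply] at hy ⊢
    rw [psi_succ, AlgHom.comp_apply, hy, map_zero]
  · intro h
    obtain ⟨a, b, ha, hb, hab⟩ : ∃ a b, N ≤ idx r s (.inl a) ∧ N ≤ idx r s (.inr b) ∧
        (idx r s (.inl a) < N + 1 ∨ idx r s (.inr b) < N + 1) := by
      by_cases h1 : N < r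
      · exact ⟨⟨N, by omega⟩, ⟨s, by omega⟩, by simp [idx, h1], by simp [idx]; omega,
          Or.inl (by simp [idx, h1])⟩
      · exact ⟨⟨r, by omega⟩, ⟨N - r, by omega⟩, by simp [idx]; omega, by simp [idx]; omega,
          Or.inr (by simp [idx]; omega)⟩
    let y : Seg r s := (phi r s).rangeRestrict (X (a, b))
    have hy : y ∈ P r s (N+1) := by
      simp only [P, RingHom.mem_ker, AlgHom.comp_apply, y]
      simp only [val_rr, map_mul, psi, aeval_X]
      rcases hab with h | h <;> simp [h]
    rw [← h] at hy
    simp only [P, RingHom.mem_ker, AlgHom.comp_apply, y] at hy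
    simp only [val_rr, map_mul, psi, aeval_X] at hy
    simp [not_lt.mpr ha, not_lt.mpr hb] at hy

lemma le_height (r s N : ℕ) (hN : N ≤ r + s + 1) : (N : ℕ∞) ≤ (P r s N).height := by
  induction N with
  | zero => simp
  | succ N ih =>
    have := Ideal.height_add_one_le_of_lt_of_isPrime (P_lt r s N (by omega))
    refine le_trans ?_ this
    push_cast
    gcongr
    exact ih (by omega)

instance (r s : ℕ) : IsNoetherianRing (Seg r s) :=
  isNoetherianRing_of_surjective _ _ (phi r s).rangeRestrict.toRingHom
    (phi r s).rangeRestrict_surjective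

theorem hopf (r s p : ℕ) (hp : p ≤ r + s) (c : Fin p → Fin (r+1) → Fin (s+1) → ℂ) :
    ∃ x : Fin (r+1) → ℂ, ∃ t : Fin (s+1) → ℂ, x ≠ 0 ∧ t ≠ 0 ∧
      ∀ l, ∑ a, ∑ b, c l a b * (x a * t b) = 0 := by
  classical
  let f : Fin p → MvPolynomial (Fin (r+1) × Fin (s+1)) ℂ := fun l =>
    ∑ a, ∑ b, C (c l a b) * X (a, b)
  let π := (phi r s).rangeRestrict
  let S : Finset (Seg r s) := Finset.univ.image (fun l => π (f l))
  have hpsi : ∀ a b, ((psi r s (r+s+1)).comp (Seg r s).val) (π (X (a,b))) = 0 := by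
    intro a b
    have hb : idx r s (.inr b) < r + s + 1 := by simp [idx]; omega
    simp only [AlgHom.comp_apply, π]
    simp only [val_rr, map_mul, psi, aeval_X]
    simp [hb]
  have hSle : Ideal.span (S : Set (Seg r s)) ≤ P r s (r+s+1) := by
    rw [Ideal.span_le]
    intro y hy
    simp only [S, Finset.coe_image, Finset.coe_univ, Set.image_univ, Set.mem_range] at hy
    obtain ⟨l, rfl⟩ := hy
    simp only [P, SetLike.mem_coe, RingHom.mem_ker, f, map_sum, map_mul]
    refine Finset.sum_eq_zero fun a _ => Finset.sum_eq_zero fun b _ => ?_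
    rw [hpsi, mul_zero]
  have hnot : ¬ (P r s (r+s+1)) ∈ (Ideal.span (S : Set (Seg r s))).minimalPrimes := by
    intro h
    have h1 := Ideal.height_le_card_of_mem_minimalPrimes_span_finset h
    have h2 := le_height r s (r+s+1) le_rfl
    have h3 : S.card ≤ p := Finset.card_image_le.trans (by simp)
    have h4 := h2.trans h1
    have h5 : r + s + 1 ≤ S.card := by exact_mod_cast h4
    omega
  obtain ⟨Q, hQ, hQle⟩ := Ideal.exists_minimalPrimes_le hSle
  have hQp : Q.IsPrime := hQ.1.1
  have hQne : ¬ P r s (r+s+1) ≤ Q := by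
    intro h
    exact hnot (le_antisymm hQle h ▸ hQ)
  obtain ⟨a, b, hab⟩ : ∃ a b, π (X (a,b)) ∉ Q := by
    by_contra! hall
    apply hQne
    intro y hy
    obtain ⟨q, rfl⟩ := (phi r s).rangeRestrict_surjective y
    have e1 : (((psi r s (r+s+1)).comp (Seg r s).val).comp π) =
        (Algebra.ofId ℂ _).comp (aeval (fun _ => (0:ℂ))) := by
      apply MvPolynomial.algHom_ext
      rintro ⟨a, b⟩
      rw [AlgHom.comp_apply, hpsi]
      simp
    have e2 : ((Ideal.Quotient.mkₐ ℂ Q).comp π) =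
        (Algebra.ofId ℂ _).comp (aeval (fun _ => (0:ℂ))) := by
      apply MvPolynomial.algHom_ext
      rintro ⟨a, b⟩
      rw [AlgHom.comp_apply, Ideal.Quotient.mkₐ_eq_mk, Ideal.Quotient.eq_zero_iff_mem.mpr (hall a b)]
      simp
    have h1 : (((psi r s (r+s+1)).comp (Seg r s).val).comp π) q = 0 := hy
    rw [e1, AlgHom.comp_apply] at h1
    have h2 : aeval (fun _ => (0:ℂ)) q = (0:ℂ) := by
      apply MvPolynomial.C_injective (Fin (r+1) ⊕ Fin (s+1)) ℂ
      rw [map_zero]; exact h1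
    have h3 : ((Ideal.Quotient.mkₐ ℂ Q).comp π) q = 0 := by
      rw [e2, AlgHom.comp_apply, h2, map_zero]
    exact Ideal.Quotient.eq_zero_iff_mem.mp h3
  let Q' : Ideal (MvPolynomial (Fin (r+1) × Fin (s+1)) ℂ) := Q.comap π
  have hQ'p : Q'.IsPrime := Ideal.comap_isPrime π Q
  have hX : (X (a,b) : MvPolynomial (Fin (r+1) × Fin (s+1)) ℂ) ∉
      vanishingIdeal ℂ (zeroLocus ℂ Q') := by
    rw [MvPolynomial.IsPrime.vanishingIdeal_zeroLocus]; exact hab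
  rw [mem_vanishingIdeal_iff] at hX
  push Not at hX
  obtain ⟨z, hz, hzab⟩ := hX
  rw [aeval_X] at hzab
  have hbin : ∀ i j, z (i, b) * z (a, j) = z (a, b) * z (i, j) := by
    intro i j
    have : (X (i,b) * X (a,j) - X (a,b) * X (i,j)) ∈ Q' := by
      have h0 : π (X (i,b) * X (a,j) - X (a,b) * X (i,j)) = 0 := by
        apply Subtype.ext
        change phi r s (X (i,b) * X (a,j) - X (a,b) * X (i,j)) = 0
        simp only [phi, map_sub, map_mul, aeval_X]
        ring
      change π _ ∈ Q
      rw [h0]; exact zero_mem _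
    have := hz _ this
    simp only [map_sub, map_mul, aeval_X] at this
    exact sub_eq_zero.mp this
  refine ⟨fun i => z (i, b), fun j => z (a, j), fun h => hzab (congrFun h a),
    fun h => hzab (congrFun h b), fun l => ?_⟩
  have hf : f l ∈ Q' := by
    change π _ ∈ Q
    apply hQ.1.2
    apply Ideal.subset_span
    simp [S]
  have hf := hz _ hf
  simp only [f, map_sum, map_mul, aeval_X, aeval_C] at hf
  simp only [hbin]
  calc _ = z (a,b) * ∑ i, ∑ j, c l i j * z (i, j) := by
        simp only [Finset.mul_sum]
        refine Finset.sum_congr rfl fun i _ => Finset.sum_congr rfl fun j _ => by ring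
    _ = 0 := by
        have hf' : ∑ i, ∑ j, c l i j * z (i, j) = 0 := hf
        rw [hf', mul_zero]

end HopfAux

open Matrix in
lemma aux_rank_lt_iff_vec {m n : ℕ} (M : Matrix (Fin m) (Fin n) ℂ) :
    M.rank < m ↔ ∃ x : Fin m → ℂ, x ≠ 0 ∧ x ᵥ* M = 0 := by
  have h1 : M.rank ≤ m := by simpa using M.rank_le_height
  constructor
  · intro h
    by_contra! hx
    have : Function.Injective (fun x => x ᵥ* M) := by
      intro x y hxy
      by_contra hne
      apply hx (x - y) (sub_ne_zero.mpr hne)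
      rw [Matrix.sub_vecMul]; exact sub_eq_zero.mpr hxy
    have h2 := (Matrix.vecMul_injective_iff.mp this).rank_matrix
    simp at h2
    omega
  · rintro ⟨x, hx, hxM⟩
    refine lt_of_le_of_ne h1 fun h => hx ?_
    have h2 : LinearIndependent ℂ M.row := by
      rw [linearIndependent_iff_card_eq_finrank_span, Set.finrank, ← Matrix.rank_eq_finrank_span_row]
      simp [h]
    exact Matrix.vecMul_injective_iff.mpr h2 (by simpa using hxM)

open Matrix in
lemma aux_rank_lt_iff_det {m n : ℕ} (M : Matrix (Fin m) (Fin n) ℂ) :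
    M.rank < m ↔ ∀ R : Matrix (Fin n) (Fin m) ℂ, (M * R).det = 0 := by
  have h1 : M.rank ≤ m := by simpa using M.rank_le_height
  constructor
  · intro h R
    obtain ⟨x, hx, hxM⟩ := (aux_rank_lt_iff_vec M).mp h
    exact Matrix.exists_vecMul_eq_zero_iff.mp ⟨x, hx, by rw [← Matrix.vecMul_vecMul, hxM, Matrix.zero_vecMul]⟩
  · intro h
    refine lt_of_le_of_ne h1 fun h2 => ?_
    have hs : Function.Surjective M.mulVec := by
      have : LinearMap.range M.mulVecLin = ⊤ := by
        apply Submodule.eq_top_of_finrank_eq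
        rw [← Matrix.rank, h2]; simp
      exact LinearMap.range_eq_top.mp this
    obtain ⟨R, hR⟩ := Matrix.mulVec_surjective_iff_exists_right_inverse.mp hs
    have := h R
    rw [hR] at this
    simp at this

open Matrix in
/-- The locus in coordinates is bounded. -/
lemma aux_bounded {m n k : ℕ} (hm : 0 < m) (hk : 0 < k) (A : Matrix (Fin m) (Fin n) ℂ)
    (b : Fin k → Matrix (Fin m) (Fin n) ℂ)
    (hb : ∀ t : Fin k → ℂ, t ≠ 0 → ¬ (∑ i, t i • b i).rank < m) :
    Bornology.IsBounded {t : Fin k → ℂ | (A + ∑ i, t i • b i).rank < m} := by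
  have : Nonempty (Fin m) := ⟨⟨0, hm⟩⟩
  have : Nonempty (Fin k) := ⟨⟨0, hk⟩⟩
  have hc1 : Continuous (fun p : (Fin m → ℂ) × (Fin k → ℂ) => ‖p.1 ᵥ* (∑ i, p.2 i • b i)‖) := by
    apply Continuous.norm
    apply Continuous.matrix_vecMul continuous_fst
    exact continuous_finsetSum _ fun i _ =>
      ((continuous_apply i).comp continuous_snd).smul continuous_const
  have hc2 : Continuous (fun x : Fin m → ℂ => x ᵥ* A) :=
    Continuous.matrix_vecMul continuous_id continuous_const
  have hcomp : IsCompact (Metric.sphere (0 : Fin m → ℂ) 1 ×ˢ Metric.sphere (0 : Fin k → ℂ) 1) :=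
    (isCompact_sphere _ _).prod (isCompact_sphere _ _)
  have hne : (Metric.sphere (0 : Fin m → ℂ) 1 ×ˢ Metric.sphere (0 : Fin k → ℂ) 1).Nonempty :=
    (NormedSpace.sphere_nonempty.mpr zero_le_one).prod (NormedSpace.sphere_nonempty.mpr zero_le_one)
  obtain ⟨⟨x0, t0⟩, ⟨hx0, ht0⟩, hmin⟩ := hcomp.exists_isMinOn hne
    (f := fun p : (Fin m → ℂ) × (Fin k → ℂ) => ‖p.1 ᵥ* (∑ i, p.2 i • b i)‖) hc1.continuousOn
  obtain ⟨K, hK⟩ := (isCompact_sphere (0 : Fin m → ℂ) 1).exists_bound_of_continuousOn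
    (f := fun x : Fin m → ℂ => x ᵥ* A) hc2.continuousOn
  have hc : 0 < ‖x0 ᵥ* (∑ i, t0 i • b i)‖ := by
    rw [norm_pos_iff]
    intro h
    have hx : x0 ≠ 0 := by rintro rfl; simp at hx0
    have ht : t0 ≠ 0 := by rintro rfl; simp at ht0
    exact hb t0 ht ((aux_rank_lt_iff_vec _).mpr ⟨x0, hx, h⟩)
  set c := ‖x0 ᵥ* (∑ i, t0 i • b i)‖ with hcdef
  rw [isBounded_iff_forall_norm_le]
  refine ⟨max (K / c) 0, fun t ht => ?_⟩
  by_cases ht0 : t = 0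
  · subst ht0; simp
  refine le_trans ?_ (le_max_left _ _)
  obtain ⟨x, hx, hxM⟩ := (aux_rank_lt_iff_vec _).mp ht
  have hxn : ‖x‖ ≠ 0 := norm_ne_zero_iff.mpr hx
  have htn : ‖t‖ ≠ 0 := norm_ne_zero_iff.mpr ht0
  let u : Fin m → ℂ := ((‖x‖ : ℂ)⁻¹) • x
  let w : Fin k → ℂ := ((‖t‖ : ℂ)⁻¹) • t
  have hu : ‖u‖ = 1 := by simp [u, norm_smul, hxn]
  have hw : ‖w‖ = 1 := by simp [w, norm_smul, htn]
  have h1 : u ᵥ* A + u ᵥ* (∑ i, t i • b i) = 0 := by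
    rw [← Matrix.vecMul_add]; simp only [u]
    rw [Matrix.smul_vecMul, hxM, smul_zero]
  have h2 : (∑ i, t i • b i) = (‖t‖ : ℂ) • ∑ i, w i • b i := by
    rw [Finset.smul_sum]
    refine Finset.sum_congr rfl fun i _ => ?_
    rw [smul_smul]
    congr 1
    simp only [w, Pi.smul_apply, smul_eq_mul]
    rw [mul_inv_cancel_left₀ (by exact_mod_cast htn)]
  have h3 : c ≤ ‖u ᵥ* (∑ i, w i • b i)‖ :=
    isMinOn_iff.mp hmin (u, w)
      (Set.mk_mem_prod (mem_sphere_zero_iff_norm.mpr hu) (mem_sphere_zero_iff_norm.mpr hw))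
  have h4 : ‖u ᵥ* A‖ ≤ K := hK u (by simp [hu])
  have h5 : ‖u ᵥ* A‖ = ‖t‖ * ‖u ᵥ* (∑ i, w i • b i)‖ := by
    rw [eq_neg_of_add_eq_zero_left h1, norm_neg, h2, Matrix.vecMul_smul, norm_smul]
    simp
  rw [le_div_iff₀ hc]
  calc ‖t‖ * c ≤ ‖t‖ * ‖u ᵥ* (∑ i, w i • b i)‖ := by gcongr
    _ ≤ K := h5.symm.le.trans h4

open MvPolynomial in
/-- The locus in coordinates is finite. -/
lemma aux_finite {m n k : ℕ} (hm : 0 < m) (hk : 0 < k) (A : Matrix (Fin m) (Fin n) ℂ)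
    (b : Fin k → Matrix (Fin m) (Fin n) ℂ)
    (hb : ∀ t : Fin k → ℂ, t ≠ 0 → ¬ (∑ i, t i • b i).rank < m) :
    {t : Fin k → ℂ | (A + ∑ i, t i • b i).rank < m}.Finite := by
  let N : Matrix (Fin m) (Fin n) (MvPolynomial (Fin k) ℂ) :=
    fun a j => C (A a j) + ∑ i, X i * C (b i a j)
  let G : Matrix (Fin n) (Fin m) ℂ → MvPolynomial (Fin k) ℂ := fun R =>
    Matrix.det (N * (R.map C : Matrix (Fin n) (Fin m) (MvPolynomial (Fin k) ℂ)) : Matrix (Fin m) (Fin m) (MvPolynomial (Fin k) ℂ))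
  have hG : ∀ R t, aeval t (G R) = ((A + ∑ i, t i • b i) * R).det := by
    intro R t
    simp only [G]
    rw [AlgHom.map_det]
    congr 1
    ext a j
    rw [AlgHom.mapMatrix_apply, Matrix.map_apply, Matrix.mul_apply, Matrix.mul_apply, map_sum]
    refine Finset.sum_congr rfl fun x _ => ?_
    simp [N, Matrix.sum_apply]
  have h : {t : Fin k → ℂ | (A + ∑ i, t i • b i).rank < m} =
      zeroLocus ℂ (Ideal.span (Set.range G)) := by
    rw [zeroLocus_span]
    ext t
    simp only [Set.mem_ofPred_eq, Set.forall_mem_range, hG]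
    exact aux_rank_lt_iff_det _
  have h2 := aux_bounded hm hk A b hb
  rw [h] at h2 ⊢
  exact aux_bounded_finite k _ h2

/-- **Lemma 1**: if `L ⊆ M(m,n)` is an `(n-m+1)`-dimensional complex subspace all of
whose nonzero elements have full rank `m` (i.e. `L` is transversal to the determinantal
variety `M¹`), then for every matrix `A` the eigenvalue locus
`{l ∈ L : rank (A + l) < m}` is finite and nonempty. -/
theorem eigenvalue_locus_finite_nonempty (m n : ℕ) (hm : 0 < m) (hmn : m ≤ n)
    (L : Submodule ℂ (Matrix (Fin m) (Fin n) ℂ))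
    (hdim : Module.finrank ℂ L = n - m + 1)
    (hfull : ∀ B ∈ L, B ≠ 0 → B.rank = m) :
    ∀ A : Matrix (Fin m) (Fin n) ℂ,
      {l : Matrix (Fin m) (Fin n) ℂ | l ∈ L ∧ (A + l).rank < m}.Finite ∧
      {l : Matrix (Fin m) (Fin n) ℂ | l ∈ L ∧ (A + l).rank < m}.Nonempty := by
  intro A
  let e := Module.finBasisOfFinrankEq ℂ L hdim
  let b : Fin (n - m + 1) → Matrix (Fin m) (Fin n) ℂ := fun i => (e i : Matrix (Fin m) (Fin n) ℂ)
  have hmem : ∀ t : Fin (n - m + 1) → ℂ, (∑ i, t i • b i) ∈ L := fun t =>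
    Submodule.sum_mem _ fun i _ => L.smul_mem _ (e i).2
  have hzero : ∀ t : Fin (n - m + 1) → ℂ, (∑ i, t i • b i) = 0 → t = 0 := by
    intro t ht
    have h1 : (∑ i, t i • e i) = 0 := by
      apply Subtype.ext
      simpa [b] using ht
    funext i
    exact (Fintype.linearIndependent_iff.mp e.linearIndependent) t h1 i
  have hb : ∀ t : Fin (n - m + 1) → ℂ, t ≠ 0 → ¬ (∑ i, t i • b i).rank < m := by
    intro t ht h
    have := hfull _ (hmem t) (fun h0 => ht (hzero t h0))
    omega
  constructor
  · refine ((aux_finite hm (Nat.succ_pos _) A b hb).image (fun t => ∑ i, t i • b i)).subset ?_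
    rintro l ⟨hl, hr⟩
    have h1 : (∑ i, e.repr ⟨l, hl⟩ i • b i) = l := by
      have := congrArg (fun z : L => (z : Matrix (Fin m) (Fin n) ℂ)) (e.sum_repr ⟨l, hl⟩)
      refine Eq.trans ?_ this
      simp only [b, Submodule.coe_sum, Submodule.coe_smul]
    refine ⟨fun i => e.repr ⟨l, hl⟩ i, ?_, h1⟩
    simp only [Set.mem_ofPred_eq, h1]; exact hr
  · obtain ⟨r, rfl⟩ : ∃ r, m = r + 1 := ⟨m - 1, by omega⟩
    let D : Fin (n - (r+1) + 1 + 1) → Matrix (Fin (r+1)) (Fin n) ℂ := Fin.cons A b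
    obtain ⟨x, t, hx, ht, hxt⟩ := HopfAux.hopf r (n - (r+1) + 1) n (by omega)
      (fun l a j => D j a l)
    have hv : Matrix.vecMul x (∑ j, t j • D j) = 0 := by
      funext l
      rw [Pi.zero_apply, ← hxt l]
      simp only [Matrix.vecMul, dotProduct, Matrix.sum_apply, Matrix.smul_apply, smul_eq_mul,
        Finset.mul_sum]
      refine Finset.sum_congr rfl fun i _ => Finset.sum_congr rfl fun j _ => by ring
    rw [Fin.sum_univ_succ] at hv
    simp only [D, Fin.cons_zero, Fin.cons_succ] at hv
    by_cases h0 : t 0 = 0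
    · exfalso
      rw [h0, zero_smul, zero_add] at hv
      refine hb (fun i => t i.succ) ?_ ((aux_rank_lt_iff_vec _).mpr ⟨x, hx, hv⟩)
      intro h
      apply ht
      funext j
      refine Fin.cases h0 (fun i => congrFun h i) j
    · refine ⟨(t 0)⁻¹ • ∑ i, t (Fin.succ i) • b i, L.smul_mem _ (hmem fun i => t i.succ), ?_⟩
      rw [aux_rank_lt_iff_vec]
      refine ⟨x, hx, ?_⟩
      have : A + (t 0)⁻¹ • ∑ i, t (Fin.succ i) • b i =
          (t 0)⁻¹ • (t 0 • A + ∑ i, t (Fin.succ i) • b i) := by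
        rw [smul_add, inv_smul_smul₀ h0]
      rw [this, Matrix.vecMul_smul, hv, smul_zero]
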